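/- Suppose there exist γ ∈ [0, 1), L > 0, and nonnegative reals c_0, c_1, c_2, … with c_0 > 0 such that l ↦ A(l) restricted to [0, L] is a continuous strictly increasing bijection onto [0, 1] whose inverse satisfies A⁻¹(w) = Σ_{j=0}^∞ c_j · w^{j+γ} for all w ∈ [0, 1]. Then for each fixed k, the leading large-N asymptotics of the expected k-th nearest-neighbor distance is lim_{N→∞} N^γ · E[D_k(N)] = c_0 · Γ(k + γ)/Γ(k). -/

import Mathlib

open MeasureTheory Metric Filter
open scoped ENNReal Topology

/-- The `k`-th smallest value (1-indexed) among the `N` real numbers `f 0, …, f (N-1)`. -/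
noncomputable def kthVal {N : ℕ} (k : ℕ) (f : Fin N → ℝ) : ℝ :=
  (((Finset.univ : Finset (Fin N)).val.map f).sort (· ≤ ·)).getD (k - 1) 0

/-!
The `k`-th smallest of `N` independent samples of a real random variable has the law of `Q W`,
where `Q` is the quantile function of the variable and `W` has the Beta distribution with
parameters `k` and `N + 1 - k`: both distribution functions are tails of a binomial distribution.
By the Poisson limit theorem the density of `N * W` converges to the Gamma density
`exp (-t) * t ^ (k - 1) / (k - 1)!`, and `N ^ γ * Q (t / N)` converges to `c * t ^ γ` when
`Q w` is asymptotic to `c * w ^ γ` at `0`. Dominated convergence then gives the limit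
`c * ∫ exp (-t) * t ^ (k - 1 + γ) / (k - 1)! = c * Γ (k + γ) / Γ k`.
-/

open ProbabilityTheory Set
open scoped Finset

lemma getElem_le_iff_lt_countP_of_pairwise {α : Type*} [LinearOrder α] {s : List α}
    (hs : s.Pairwise (· ≤ ·)) {m : ℕ} (hm : m < s.length) (l : α) :
    s[m] ≤ l ↔ m < s.countP (· ≤ l) := by
  induction s generalizing m with
  | nil => simp at hm
  | cons a t ih =>
    rw [List.pairwise_cons] at hs
    by_cases ha : a ≤ l
    · cases m with
      | zero => simp [ha]
      | succ m => simpa [ha] using ih hs.2 (by simpa using hm)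
    · have h_gt : ∀ b ∈ a :: t, ¬ b ≤ l := by
        rintro b (_ | ⟨_, hb⟩)
        exacts [ha, fun hbl => ha ((hs.1 b hb).trans hbl)]
      have h_countP : (a :: t).countP (· ≤ l) = 0 :=
        List.countP_eq_zero.2 fun b hb => by simpa using h_gt b hb
      simp only [h_countP, Nat.not_lt_zero, iff_false]
      exact h_gt _ (List.getElem_mem hm)

lemma kthVal_succ_le_iff {N m : ℕ} (hm : m < N) (f : Fin N → ℝ) (l : ℝ) :
    kthVal (m + 1) f ≤ l ↔ m < #{i | f i ≤ l} := by
  have h_len : m < ((Finset.univ.val.map f).sort (· ≤ ·)).length := by simpa using hm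
  rw [kthVal, Nat.add_sub_cancel, List.getD_eq_getElem _ _ h_len,
    getElem_le_iff_lt_countP_of_pairwise (Multiset.pairwise_sort _ _), ← Multiset.coe_countP,
    Multiset.sort_eq, Multiset.countP_map]
  rfl

lemma setOf_filter_eq_univ_pi {ι Ω : Type*} [Fintype ι] {p : Ω → Prop} [DecidablePred p]
    [DecidableEq ι] (S : Finset ι) :
    {ω : ι → Ω | ({i | p (ω i)} : Finset ι) = S} =
      univ.pi fun i => if i ∈ S then {a | p a} else {a | p a}ᶜ := by
  ext ω
  simp only [Finset.ext_iff, Finset.mem_filter_univ, mem_ofPred_eq, mem_univ_pi]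
  refine forall_congr' fun i => ?_
  by_cases hi : i ∈ S <;> simp [hi]

section Counting

variable {ι Ω : Type*} [Fintype ι] [MeasurableSpace Ω] {p : Ω → Prop} [DecidablePred p]

lemma measurable_card_filter (hp : MeasurableSet {a | p a}) :
    Measurable fun ω : ι → Ω => #{i | p (ω i)} := by
  simp only [Finset.card_filter]
  exact Finset.measurable_sum _ fun i _ =>
    Measurable.ite (measurable_pi_apply i hp) measurable_const measurable_const

lemma measurableSet_setOf_filter_eq (hp : MeasurableSet {a | p a}) (S : Finset ι) :
    MeasurableSet {ω : ι → Ω | ({i | p (ω i)} : Finset ι) = S} := by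
  classical
  rw [setOf_filter_eq_univ_pi]
  exact .univ_pi fun i => by split_ifs <;> measurability

variable (μ : Measure Ω) [IsProbabilityMeasure μ]

lemma pi_real_filter_eq (hp : MeasurableSet {a | p a}) (S : Finset ι) :
    (Measure.pi fun _ : ι => μ).real {ω | ({i | p (ω i)} : Finset ι) = S} =
      μ.real {a | p a} ^ #S * (1 - μ.real {a | p a}) ^ (Fintype.card ι - #S) := by
  classical
  rw [setOf_filter_eq_univ_pi, measureReal_def, Measure.pi_pi, ENNReal.toReal_prod]
  simp only [← measureReal_def, apply_ite μ.real, probReal_compl_eq_one_sub hp]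
  rw [Finset.prod_ite, Finset.prod_const, Finset.prod_const, Finset.filter_mem_eq_inter,
    Finset.univ_inter, Finset.filter_notMem_eq_sdiff, ← Finset.compl_eq_univ_sdiff,
    Finset.card_compl]

lemma pi_real_card_filter_eq (hp : MeasurableSet {a | p a}) (r : ℕ) :
    (Measure.pi fun _ : ι => μ).real {ω | #{i | p (ω i)} = r} =
      (bernsteinPolynomial ℝ (Fintype.card ι) r).eval (μ.real {a | p a}) := by
  have h_union : {ω : ι → Ω | #{i | p (ω i)} = r} =
      (fun ω => ({i | p (ω i)} : Finset ι)) ⁻¹' ↑((Finset.univ : Finset ι).powersetCard r) := by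
    ext ω
    simp
  rw [h_union, ← sum_measureReal_preimage_singleton _ fun S _ =>
      measurableSet_setOf_filter_eq hp S]
  refine (Finset.sum_congr rfl fun S _ => pi_real_filter_eq μ hp S).trans ?_
  rw [Finset.sum_powersetCard _ _ fun s =>
    μ.real {a | p a} ^ s * (1 - μ.real {a | p a}) ^ (Fintype.card ι - s)]
  simp [bernsteinPolynomial, mul_assoc]

lemma pi_real_card_filter_le (hp : MeasurableSet {a | p a}) (m : ℕ) :
    (Measure.pi fun _ : ι => μ).real {ω | #{i | p (ω i)} ≤ m} =
      (∑ r ∈ Finset.range (m + 1), bernsteinPolynomial ℝ (Fintype.card ι) r).eval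
        (μ.real {a | p a}) := by
  have h_preimage : {ω : ι → Ω | #{i | p (ω i)} ≤ m} =
      (fun ω => #{i | p (ω i)}) ⁻¹' ↑(Finset.range (m + 1)) := by
    ext ω
    simp
  rw [h_preimage, ← sum_measureReal_preimage_singleton _ fun r _ =>
      measurable_card_filter hp (measurableSet_singleton r), Polynomial.eval_finsetSum]
  exact Finset.sum_congr rfl fun r _ => pi_real_card_filter_eq μ hp r

end Counting

lemma bernsteinPolynomial_eval_eq {R : Type*} [CommRing R] (n r : ℕ) (w : R) :
    (bernsteinPolynomial R n r).eval w = n.choose r * w ^ r * (1 - w) ^ (n - r) := by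
  simp only [bernsteinPolynomial, Polynomial.eval_mul, Polynomial.eval_pow,
    Polynomial.eval_natCast, Polynomial.eval_sub, Polynomial.eval_one, Polynomial.eval_X]

lemma bernsteinPolynomial_eval_nonneg (n r : ℕ) {w : ℝ} (hw : w ∈ Icc 0 1) :
    0 ≤ (bernsteinPolynomial ℝ n r).eval w := by
  have := hw.1
  have := sub_nonneg.2 hw.2
  rw [bernsteinPolynomial_eval_eq]
  positivity

lemma derivative_sum_range_bernsteinPolynomial (R : Type*) [CommRing R] (n m : ℕ) :
    (∑ r ∈ Finset.range (m + 1), bernsteinPolynomial R (n + 1) r).derivative =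
      -((n + 1) * bernsteinPolynomial R n m) := by
  induction m with
  | zero =>
    simp only [zero_add, Finset.sum_range_one, bernsteinPolynomial.derivative_zero]
    push_cast
    ring
  | succ m ih =>
    rw [Finset.sum_range_succ, Polynomial.derivative_add, ih,
      bernsteinPolynomial.derivative_succ_aux]
    ring

lemma ae_betaMeasure_mem_Ioo (α β : ℝ) : ∀ᵐ w ∂betaMeasure α β, w ∈ Ioo 0 1 := by
  refine (ae_withDensity_iff (measurable_betaPDFReal α β).ennreal_ofReal).2 <|
    ae_of_all _ fun w hw => ⟨?_, ?_⟩ <;> by_contra! h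
  exacts [hw (betaPDF_eq_zero_of_nonpos h), hw (betaPDF_eq_zero_of_one_le h)]

lemma betaPDFReal_natCast_add_one {m j : ℕ} {w : ℝ} (hw : w ∈ Ioo 0 1) :
    betaPDFReal (m + 1) (j + 1) w =
      (m + j + 1) * (bernsteinPolynomial ℝ (m + j) m).eval w := by
  have h_beta :
      beta (m + 1) (j + 1) = (m.factorial * j.factorial : ℝ) / (m + j + 1).factorial := by
    rw [beta, show (m + 1 + (j + 1) : ℝ) = ((m + j + 1 : ℕ) : ℝ) + 1 by push_cast; ring]
    simp only [Real.Gamma_nat_eq_factorial]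
  rw [betaPDFReal, if_pos ⟨hw.1, hw.2⟩, h_beta, bernsteinPolynomial_eval_eq, Nat.cast_add_choose,
    Nat.factorial_succ, add_sub_cancel_right, add_sub_cancel_right, Real.rpow_natCast,
    Real.rpow_natCast, Nat.add_sub_cancel_left]
  push_cast
  field_simp

lemma betaMeasure_natCast_add_one (m j : ℕ) :
    betaMeasure (m + 1) (j + 1) = (volume.restrict (Ioo 0 1)).withDensity fun w =>
      ENNReal.ofReal ((m + j + 1) * (bernsteinPolynomial ℝ (m + j) m).eval w) := by
  rw [betaMeasure, ← withDensity_indicator measurableSet_Ioo]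
  congr 1
  ext w
  by_cases hw : w ∈ Ioo (0 : ℝ) 1
  · rw [indicator_of_mem hw, betaPDF, betaPDFReal_natCast_add_one hw]
  · rw [indicator_of_notMem hw, betaPDF, betaPDFReal, if_neg (by simpa using hw),
      ENNReal.ofReal_zero]

lemma integral_betaMeasure_natCast_add_one (m j : ℕ) (f : ℝ → ℝ) :
    ∫ w, f w ∂betaMeasure (m + 1) (j + 1) =
      ∫ w in Ioo 0 1, (m + j + 1) * (bernsteinPolynomial ℝ (m + j) m).eval w * f w := by
  rw [betaMeasure_natCast_add_one,
    integral_withDensity_eq_integral_toReal_smul (by fun_prop) (by simp)]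
  refine setIntegral_congr_fun measurableSet_Ioo fun w hw => ?_
  have := bernsteinPolynomial_eval_nonneg (m + j) m (Ioo_subset_Icc_self hw)
  simp only [smul_eq_mul]
  rw [ENNReal.toReal_ofReal (by positivity)]

lemma betaMeasure_natCast_add_one_real_Iic (m j : ℕ) {a : ℝ} (ha : a ∈ Icc 0 1) :
    (betaMeasure (m + 1) (j + 1)).real (Iic a) =
      1 - (∑ r ∈ Finset.range (m + 1), bernsteinPolynomial ℝ (m + j + 1) r).eval a := by
  set P := ∑ r ∈ Finset.range (m + 1), bernsteinPolynomial ℝ (m + j + 1) r with hP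
  have h_deriv : P.derivative = -((m + j + 1) * bernsteinPolynomial ℝ (m + j) m) := by
    rw [hP, derivative_sum_range_bernsteinPolynomial, Nat.cast_add]
  have h_zero : P.eval 0 = 1 := by
    simp [hP, Polynomial.eval_finsetSum, bernsteinPolynomial.eval_at_0]
  have h_inter : Ioc 0 1 ∩ Iic a = Ioc 0 a := by
    rw [Ioc_inter_Iic, inf_eq_right.2 ha.2]
  calc (betaMeasure (m + 1) (j + 1)).real (Iic a)
      = ∫ w, (Iic a).indicator 1 w ∂betaMeasure (m + 1) (j + 1) :=
        (integral_indicator_one measurableSet_Iic).symm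
    _ = ∫ w in 0..a, -P.derivative.eval w := by
        rw [integral_betaMeasure_natCast_add_one, ← integral_Ioc_eq_integral_Ioo,
          intervalIntegral.integral_of_le ha.1, h_deriv, ← h_inter,
          ← setIntegral_indicator measurableSet_Iic]
        simp only [indicator_apply, Pi.one_apply, mul_ite, mul_one, mul_zero, Polynomial.eval_neg,
          neg_neg, Polynomial.eval_mul, Polynomial.eval_add, Polynomial.eval_natCast,
          Polynomial.eval_one]
    _ = 1 - P.eval a := by
        rw [intervalIntegral.integral_neg, intervalIntegral.integral_eq_sub_of_hasDerivAt
          (fun w _ => P.hasDerivAt w) (P.derivative.continuous.intervalIntegrable _ _), h_zero]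
        ring

/-- `Q` is a quantile function of the law `ν` on the open unit interval: it is the left adjoint
there of the distribution function of `ν`. Its values outside `(0, 1)` are unconstrained. -/
def IsQuantile (ν : Measure ℝ) (Q : ℝ → ℝ) : Prop :=
  ∀ ⦃w⦄, w ∈ Ioo (0 : ℝ) 1 → ∀ l, Q w ≤ l ↔ w ≤ ν.real (Iic l)

namespace IsQuantile

variable {ν : Measure ℝ} {Q : ℝ → ℝ}

lemma monotoneOn (hQ : IsQuantile ν Q) : MonotoneOn Q (Ioo 0 1) := fun _ hv _ hw hvw =>
  (hQ hv _).2 (hvw.trans ((hQ hw _).1 le_rfl))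

lemma aemeasurable_betaMeasure (hQ : IsQuantile ν Q) (α β : ℝ) :
    AEMeasurable Q (betaMeasure α β) := by
  rw [← Measure.restrict_eq_self_of_ae_mem (ae_betaMeasure_mem_Ioo α β)]
  exact aemeasurable_restrict_of_monotoneOn measurableSet_Ioo hQ.monotoneOn

lemma of_surjOn_of_leftInvOn [IsFiniteMeasure ν] {a b : ℝ}
    (h_surj : SurjOn (fun l => ν.real (Iic l)) (Icc a b) (Icc 0 1))
    (h_inv : LeftInvOn Q (fun l => ν.real (Iic l)) (Icc a b)) : IsQuantile ν Q := by
  have h_mono : Monotone fun l => ν.real (Iic l) := fun _ _ h =>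
    measureReal_mono (Iic_subset_Iic.2 h)
  intro w hw l
  obtain ⟨u, hu, rfl⟩ := h_surj (Ioo_subset_Icc_self hw)
  rw [h_inv hu]
  refine ⟨fun h => h_mono h, fun h => ?_⟩
  by_contra! hlu
  obtain hla | hal := lt_or_ge l a
  · obtain ⟨v, hv, hv0⟩ := h_surj (left_mem_Icc.2 zero_le_one)
    exact (hw.1.trans_le (h.trans (h_mono (hla.le.trans hv.1)))).ne' hv0
  · refine hlu.ne ?_
    rw [← h_inv ⟨hal, hlu.le.trans hu.2⟩, ← h_inv hu]
    exact congrArg Q (le_antisymm (h_mono hlu.le) h)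

end IsQuantile

lemma setOf_kthVal_succ_le_eq {Ω : Type*} {X : Ω → ℝ} {N m : ℕ} (hm : m < N) (l : ℝ) :
    {ω : Fin N → Ω | kthVal (m + 1) (fun i => X (ω i)) ≤ l} =
      {ω | #{i | X (ω i) ≤ l} ≤ m}ᶜ := by
  ext ω
  simp [kthVal_succ_le_iff hm]

section Law

variable {Ω : Type*} [MeasurableSpace Ω] {X : Ω → ℝ}

lemma measurable_kthVal_succ {N m : ℕ} (hm : m < N) (hX : Measurable X) :
    Measurable fun ω : Fin N → Ω => kthVal (m + 1) fun i => X (ω i) := by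
  refine measurable_of_Iic fun l => ?_
  have h_meas : MeasurableSet {a | X a ≤ l} := hX measurableSet_Iic
  exact (measurableSet_le (measurable_card_filter h_meas) measurable_const).compl.congr
    (setOf_kthVal_succ_le_eq hm l).symm

variable (μ : Measure Ω) [IsProbabilityMeasure μ] {Q : ℝ → ℝ}

theorem map_kthVal_eq_map_betaMeasure (hX : Measurable X) (hQ : IsQuantile (μ.map X) Q)
    (m j : ℕ) :
    (Measure.pi fun _ : Fin (m + j + 1) => μ).map (fun ω => kthVal (m + 1) fun i => X (ω i)) =
      (betaMeasure (m + 1) (j + 1)).map Q := by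
  have : IsProbabilityMeasure (betaMeasure (m + 1) (j + 1)) :=
    isProbabilityMeasureBeta (by positivity) (by positivity)
  have hm : m < m + j + 1 := by lia
  refine Measure.ext_of_Iic _ _ fun l => ?_
  have h_meas : MeasurableSet {a | X a ≤ l} := hX measurableSet_Iic
  have h_cdf : (μ.map X).real (Iic l) = μ.real {a | X a ≤ l} :=
    map_measureReal_apply hX measurableSet_Iic
  rw [Measure.map_apply (measurable_kthVal_succ hm hX) measurableSet_Iic,
    Measure.map_apply_of_aemeasurable (hQ.aemeasurable_betaMeasure _ _) measurableSet_Iic,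
    ← measureReal_eq_measureReal_iff]
  calc (Measure.pi fun _ : Fin (m + j + 1) => μ).real
        {ω | kthVal (m + 1) (fun i => X (ω i)) ≤ l}
      = 1 - (∑ r ∈ Finset.range (m + 1), bernsteinPolynomial ℝ (m + j + 1) r).eval
          (μ.real {a | X a ≤ l}) := by
        rw [setOf_kthVal_succ_le_eq hm,
          probReal_compl_eq_one_sub
            (measurableSet_le (measurable_card_filter h_meas) measurable_const),
          pi_real_card_filter_le μ h_meas, Fintype.card_fin]
    _ = (betaMeasure (m + 1) (j + 1)).real (Iic ((μ.map X).real (Iic l))) := by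
        rw [h_cdf,
          betaMeasure_natCast_add_one_real_Iic m j ⟨measureReal_nonneg, measureReal_le_one⟩]
    _ = (betaMeasure (m + 1) (j + 1)).real (Q ⁻¹' Iic l) := by
        refine measureReal_congr ?_
        filter_upwards [ae_betaMeasure_mem_Ioo (m + 1) (j + 1)] with w hw
        exact propext (hQ hw l).symm

theorem integral_kthVal_eq (hX : Measurable X) (hQ : IsQuantile (μ.map X) Q) (m j : ℕ) :
    ∫ ω, kthVal (m + 1) (fun i => X (ω i)) ∂(Measure.pi fun _ : Fin (m + j + 1) => μ) =
      ∫ w in Ioo 0 1, (m + j + 1) * (bernsteinPolynomial ℝ (m + j) m).eval w * Q w := by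
  have h_kthVal := measurable_kthVal_succ (show m < m + j + 1 by lia) hX
  calc ∫ ω, kthVal (m + 1) (fun i => X (ω i)) ∂(Measure.pi fun _ : Fin (m + j + 1) => μ)
      = ∫ y, y ∂(Measure.pi fun _ : Fin (m + j + 1) => μ).map
          fun ω => kthVal (m + 1) fun i => X (ω i) :=
        (integral_map h_kthVal.aemeasurable aestronglyMeasurable_id).symm
    _ = ∫ w, Q w ∂betaMeasure (m + 1) (j + 1) := by
        rw [map_kthVal_eq_map_betaMeasure μ hX hQ]
        exact integral_map (hQ.aemeasurable_betaMeasure _ _) aestronglyMeasurable_id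
    _ = _ := integral_betaMeasure_natCast_add_one m j Q

end Law

lemma bernsteinPolynomial_eval_le (n m : ℕ) {w : ℝ} (hw : w ∈ Icc 0 1) :
    (bernsteinPolynomial ℝ n m).eval w ≤
      Real.exp (m + 1) / m.factorial * (Real.exp (-((n + 1) * w)) * ((n + 1) * w) ^ m) := by
  obtain ⟨hw0, hw1⟩ := hw
  have h_choose : (n.choose m : ℝ) ≤ (n + 1) ^ m / m.factorial :=
    (Nat.choose_le_pow_div m n).trans (by gcongr; simp)
  have h_pow : (1 - w) ^ (n - m) ≤ Real.exp (m + 1) * Real.exp (-((n + 1) * w)) := by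
    have h_sub : (n : ℝ) - m ≤ (n - m : ℕ) := by
      rw [sub_le_iff_le_add]
      exact_mod_cast le_tsub_add
    calc (1 - w) ^ (n - m) ≤ Real.exp (-w) ^ (n - m) :=
          pow_le_pow_left₀ (sub_nonneg.2 hw1) (Real.one_sub_le_exp_neg w) _
      _ ≤ Real.exp (m + 1) * Real.exp (-((n + 1) * w)) := by
          rw [← Real.exp_nat_mul, ← Real.exp_add, Real.exp_le_exp]
          nlinarith
  calc (bernsteinPolynomial ℝ n m).eval w = n.choose m * w ^ m * (1 - w) ^ (n - m) :=
        bernsteinPolynomial_eval_eq n m w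
    _ ≤ (n + 1) ^ m / m.factorial * w ^ m *
          (Real.exp (m + 1) * Real.exp (-((n + 1) * w))) := by
        gcongr
    _ = _ := by
        rw [mul_pow]
        ring

lemma tendsto_bernsteinPolynomial_eval_inv_mul (m : ℕ) (t : ℝ) :
    Tendsto (fun n : ℕ => (bernsteinPolynomial ℝ n m).eval ((n + 1 : ℝ)⁻¹ * t)) atTop
      (𝓝 (Real.exp (-t) * t ^ m / m.factorial)) := by
  simp only [bernsteinPolynomial_eval_eq]
  refine tendsto_choose_mul_pow_of_tendsto_mul_atTop m ?_
  simpa [div_eq_mul_inv, mul_assoc] using (tendsto_natCast_div_add_atTop (1 : ℝ)).mul_const t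

lemma tendsto_rpow_mul_comp_inv_mul {ι : Type*} {l : Filter ι} {a : ι → ℝ}
    (ha : Tendsto a l atTop) {Q : ℝ → ℝ} {γ c : ℝ}
    (hc : Tendsto (fun w => Q w / w ^ γ) (𝓝[>] 0) (𝓝 c)) {t : ℝ} (ht : 0 < t) :
    Tendsto (fun i => a i ^ γ * Q ((a i)⁻¹ * t)) l (𝓝 (c * t ^ γ)) := by
  have h_pos : ∀ᶠ i in l, 0 < a i := ha.eventually_gt_atTop 0
  have h_arg : Tendsto (fun i => (a i)⁻¹ * t) l (𝓝[>] 0) := by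
    refine tendsto_nhdsWithin_iff.2 ⟨by simpa using ha.inv_tendsto_atTop.mul_const t, ?_⟩
    filter_upwards [h_pos] with i hi
    exact mul_pos (inv_pos.2 hi) ht
  refine ((hc.comp h_arg).mul_const (t ^ γ)).congr' ?_
  filter_upwards [h_pos] with i hi
  rw [Function.comp_apply, Real.mul_rpow (inv_nonneg.2 hi.le) ht.le, Real.inv_rpow hi.le]
  have := Real.rpow_pos_of_pos hi γ
  have := Real.rpow_pos_of_pos ht γ
  field_simp

lemma setIntegral_Ioi_indicator_comp_inv_mul (g : ℝ → ℝ) {a : ℝ} (ha : 0 < a) :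
    ∫ t in Ioi 0, (Ioo 0 1).indicator g (a⁻¹ * t) = a * ∫ w in Ioo 0 1, g w := by
  rw [integral_comp_mul_left_Ioi _ _ (inv_pos.2 ha), mul_zero, inv_inv,
    setIntegral_indicator measurableSet_Ioo, inter_eq_right.2 Ioo_subset_Ioi_self, smul_eq_mul]

/-- The integrand of `N ^ γ * ∫ w, b w * Q w` over `(0, 1)`, `b` the Beta density with parameters
`m + 1` and `N - m` and `N = n + 1`, after the substitution `t = N * w`. -/
noncomputable def scaledIntegrand (m : ℕ) (γ : ℝ) (Q : ℝ → ℝ) (n : ℕ) (t : ℝ) : ℝ :=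
  (n + 1 : ℝ) ^ γ *
    (Ioo 0 1).indicator (fun w => (bernsteinPolynomial ℝ n m).eval w * Q w) ((n + 1 : ℝ)⁻¹ * t)

section ScaledIntegrand

variable {m : ℕ} {γ B c t : ℝ} {Q : ℝ → ℝ}

lemma setIntegral_scaledIntegrand (n : ℕ) :
    ∫ t in Ioi 0, scaledIntegrand m γ Q n t =
      (n + 1 : ℝ) ^ γ *
        ∫ w in Ioo 0 1, (n + 1) * (bernsteinPolynomial ℝ n m).eval w * Q w := by
  simp only [scaledIntegrand, integral_const_mul, mul_assoc]
  rw [setIntegral_Ioi_indicator_comp_inv_mul _ (by positivity)]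

lemma aestronglyMeasurable_scaledIntegrand (hQ : AEMeasurable Q (volume.restrict (Ioo 0 1)))
    (n : ℕ) : AEStronglyMeasurable (scaledIntegrand m γ Q n) := by
  have h_indicator : AEMeasurable
      ((Ioo 0 1).indicator fun w => (bernsteinPolynomial ℝ n m).eval w * Q w) :=
    (aemeasurable_indicator_iff measurableSet_Ioo).2 (by fun_prop)
  exact ((h_indicator.comp_quasiMeasurePreserving (Measure.quasiMeasurePreserving_smul volume
    (by positivity : (n + 1 : ℝ)⁻¹ ≠ 0))).const_mul _).aestronglyMeasurable

lemma abs_scaledIntegrand_le (hB : ∀ w ∈ Ioo 0 1, |Q w| ≤ B * w ^ γ) (n : ℕ) (ht : 0 < t) :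
    |scaledIntegrand m γ Q n t| ≤
      B * (Real.exp (m + 1) / m.factorial) * (Real.exp (-t) * t ^ (m + 1 + γ - 1)) := by
  have hB0 : 0 ≤ B := nonneg_of_mul_nonneg_left
    ((abs_nonneg _).trans (hB 2⁻¹ (by norm_num))) (by positivity)
  rw [scaledIntegrand, abs_mul, abs_of_nonneg (by positivity)]
  by_cases hw : (n + 1 : ℝ)⁻¹ * t ∈ Ioo 0 1
  · have h_b := bernsteinPolynomial_eval_le n m (Ioo_subset_Icc_self hw)
    have h_pow : (n + 1 : ℝ) ^ γ * ((n + 1 : ℝ)⁻¹ * t) ^ γ = t ^ γ := by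
      rw [← Real.mul_rpow (by positivity) hw.1.le, mul_inv_cancel_left₀ (by positivity)]
    rw [mul_inv_cancel_left₀ (by positivity)] at h_b
    rw [indicator_of_mem hw, abs_mul,
      abs_of_nonneg (bernsteinPolynomial_eval_nonneg n m (Ioo_subset_Icc_self hw))]
    calc (n + 1 : ℝ) ^ γ * ((bernsteinPolynomial ℝ n m).eval ((n + 1 : ℝ)⁻¹ * t) *
          |Q ((n + 1 : ℝ)⁻¹ * t)|)
        ≤ (n + 1 : ℝ) ^ γ * (Real.exp (m + 1) / m.factorial * (Real.exp (-t) * t ^ m) *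
          (B * ((n + 1 : ℝ)⁻¹ * t) ^ γ)) := by
          gcongr
          exact hB _ hw
      _ = B * (Real.exp (m + 1) / m.factorial) * (Real.exp (-t) * t ^ (m + 1 + γ - 1)) := by
          rw [show (m : ℝ) + 1 + γ - 1 = m + γ by ring, Real.rpow_add ht, Real.rpow_natCast,
            ← h_pow]
          ring
  · rw [indicator_of_notMem hw, abs_zero, mul_zero]
    positivity

lemma tendsto_scaledIntegrand (hc : Tendsto (fun w => Q w / w ^ γ) (𝓝[>] 0) (𝓝 c)) (ht : 0 < t) :
    Tendsto (fun n => scaledIntegrand m γ Q n t) atTop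
      (𝓝 (c / m.factorial * (Real.exp (-t) * t ^ (m + 1 + γ - 1)))) := by
  have h_atTop : Tendsto (fun n : ℕ => (n + 1 : ℝ)) atTop atTop :=
    tendsto_atTop_add_const_right _ _ tendsto_natCast_atTop_atTop
  have h_mem : ∀ᶠ n : ℕ in atTop, (n + 1 : ℝ)⁻¹ * t ∈ Ioo 0 1 := by
    filter_upwards [h_atTop.eventually_gt_atTop t] with n hn
    have := ht.trans hn
    exact ⟨by positivity, by rwa [inv_mul_lt_one₀ this]⟩
  have h_lim := (tendsto_bernsteinPolynomial_eval_inv_mul m t).mul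
    (tendsto_rpow_mul_comp_inv_mul h_atTop hc ht)
  have h_eq : Real.exp (-t) * t ^ m / m.factorial * (c * t ^ γ) =
      c / m.factorial * (Real.exp (-t) * t ^ (m + 1 + γ - 1)) := by
    rw [show (m : ℝ) + 1 + γ - 1 = m + γ by ring, Real.rpow_add ht, Real.rpow_natCast]
    ring
  rw [← h_eq]
  refine h_lim.congr' ?_
  filter_upwards [h_mem] with n hn
  rw [scaledIntegrand, indicator_of_mem hn]
  ring

end ScaledIntegrand

theorem tendsto_rpow_mul_integral_bernsteinPolynomial_mul {m : ℕ} {γ B c : ℝ} {Q : ℝ → ℝ}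
    (hγ : 0 < m + 1 + γ) (hQ : AEMeasurable Q (volume.restrict (Ioo 0 1)))
    (hB : ∀ w ∈ Ioo 0 1, |Q w| ≤ B * w ^ γ)
    (hc : Tendsto (fun w => Q w / w ^ γ) (𝓝[>] 0) (𝓝 c)) :
    Tendsto (fun n : ℕ => (n + 1 : ℝ) ^ γ *
        ∫ w in Ioo 0 1, (n + 1) * (bernsteinPolynomial ℝ n m).eval w * Q w) atTop
      (𝓝 (c * Real.Gamma (m + 1 + γ) / m.factorial)) := by
  have h_limit : ∫ t in Ioi 0, c / m.factorial * (Real.exp (-t) * t ^ (m + 1 + γ - 1)) =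
      c * Real.Gamma (m + 1 + γ) / m.factorial := by
    rw [integral_const_mul, ← Real.Gamma_eq_integral hγ]
    ring
  simp only [← setIntegral_scaledIntegrand, ← h_limit]
  exact tendsto_integral_of_dominated_convergence _
    (fun n => (aestronglyMeasurable_scaledIntegrand hQ n).restrict)
    ((Real.GammaIntegral_convergent hγ).const_mul _)
    (fun n => (ae_restrict_iff' measurableSet_Ioi).2 <|
      ae_of_all _ fun t ht => abs_scaledIntegrand_le hB n ht)
    ((ae_restrict_iff' measurableSet_Ioi).2 <|
      ae_of_all _ fun t ht => tendsto_scaledIntegrand hc ht)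

theorem kth_nearest_distance_leading_asymptotics_general {Ω : Type*} [MeasurableSpace Ω]
    (μ : Measure Ω) [IsProbabilityMeasure μ] {X : Ω → ℝ} (hX : Measurable X) {k : ℕ} (hk : 1 ≤ k)
    {Q : ℝ → ℝ} (hQ : IsQuantile (μ.map X) Q) {γ B c : ℝ} (hγ : 0 < k + γ)
    (hB : ∀ w ∈ Ioo 0 1, |Q w| ≤ B * w ^ γ)
    (hc : Tendsto (fun w => Q w / w ^ γ) (𝓝[>] 0) (𝓝 c)) :
    Tendsto
      (fun N : ℕ => (N : ℝ) ^ γ *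
        ∫ ω : Fin N → Ω, kthVal k (fun i => X (ω i)) ∂(Measure.pi fun _ : Fin N => μ))
      atTop (𝓝 (c * Real.Gamma (k + γ) / Real.Gamma k)) := by
  obtain ⟨m, rfl⟩ := Nat.exists_eq_add_of_le' hk
  push_cast at hγ ⊢
  rw [Real.Gamma_nat_eq_factorial, ← tendsto_add_atTop_iff_nat 1]
  have h_meas := aemeasurable_restrict_of_monotoneOn (μ := volume) measurableSet_Ioo hQ.monotoneOn
  refine (tendsto_rpow_mul_integral_bernsteinPolynomial_mul hγ h_meas hB hc).congr' ?_
  filter_upwards [eventually_ge_atTop m] with n hn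
  obtain ⟨j, rfl⟩ := Nat.exists_eq_add_of_le hn
  rw [integral_kthVal_eq μ hX hQ]
  push_cast
  rfl

lemma tsum_mul_rpow_natCast_add (c : ℕ → ℝ) (γ : ℝ) {w : ℝ} (hw : 0 < w) :
    ∑' j : ℕ, c j * w ^ (j + γ) = (∑' j, c j * w ^ j) * w ^ γ := by
  simp only [Real.rpow_add hw, Real.rpow_natCast, ← mul_assoc, tsum_mul_right]

lemma abs_mul_pow_le_abs (a : ℝ) (j : ℕ) {w : ℝ} (hw : w ∈ Icc 0 1) : |a * w ^ j| ≤ |a| := by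
  rw [abs_mul, abs_pow, abs_of_nonneg hw.1]
  exact mul_le_of_le_one_right (abs_nonneg a) (pow_le_one₀ hw.1 hw.2)

section PowerSeries

variable {Q : ℝ → ℝ} {c : ℕ → ℝ} {γ : ℝ}

lemma abs_le_tsum_abs_mul_rpow (hc : Summable c)
    (hQ : ∀ w ∈ Ioo 0 1, Q w = ∑' j : ℕ, c j * w ^ (j + γ)) {w : ℝ} (hw : w ∈ Ioo 0 1) :
    |Q w| ≤ (∑' j, |c j|) * w ^ γ := by
  have h_pow := Real.rpow_pos_of_pos hw.1 γ
  rw [hQ w hw, tsum_mul_rpow_natCast_add c γ hw.1, abs_mul, abs_of_pos h_pow]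
  gcongr
  exact tsum_of_norm_bounded (f := fun j => c j * w ^ j) hc.abs.hasSum fun j =>
    abs_mul_pow_le_abs (c j) j (Ioo_subset_Icc_self hw)

lemma tendsto_div_rpow_nhdsGT_zero (hc : Summable c)
    (hQ : ∀ w ∈ Ioo 0 1, Q w = ∑' j : ℕ, c j * w ^ (j + γ)) :
    Tendsto (fun w => Q w / w ^ γ) (𝓝[>] 0) (𝓝 (c 0)) := by
  have h_cont : ContinuousOn (fun w : ℝ => ∑' j, c j * w ^ j) (Icc 0 1) :=
    continuousOn_tsum (fun j => by fun_prop) hc.abs fun j w hw => abs_mul_pow_le_abs (c j) j hw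
  have h_zero : ∑' j, c j * (0 : ℝ) ^ j = c 0 := by
    rw [tsum_eq_single 0 fun j hj => by simp [hj], pow_zero, mul_one]
  have h_lim : Tendsto (fun w : ℝ => ∑' j, c j * w ^ j) (𝓝[Ioo 0 1] 0) (𝓝 (∑' j, c j * 0 ^ j)) :=
    (h_cont 0 (by simp)).mono_left (nhdsWithin_mono 0 Ioo_subset_Icc_self)
  rw [h_zero, nhdsWithin_Ioo_eq_nhdsGT one_pos] at h_lim
  refine h_lim.congr' ?_
  filter_upwards [Ioo_mem_nhdsGT one_pos] with w hw
  rw [hQ w hw, tsum_mul_rpow_natCast_add c γ hw.1,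
    mul_div_cancel_right₀ _ (Real.rpow_pos_of_pos hw.1 γ).ne']

end PowerSeries

section Distance

variable {M : Type*} [PseudoMetricSpace M] [MeasurableSpace M] [OpensMeasurableSpace M]
  (μ : Measure M) (x : M)

lemma map_dist_real_Iic (l : ℝ) :
    (μ.map (dist x)).real (Iic l) = (μ (closedBall x l)).toReal := by
  rw [map_measureReal_apply (by fun_prop) measurableSet_Iic, measureReal_def]
  congr 2
  ext y
  exact mem_closedBall'.symm

lemma isQuantile_map_dist [IsFiniteMeasure μ] {Q : ℝ → ℝ} {a b : ℝ}
    (h_surj : SurjOn (fun l => (μ (closedBall x l)).toReal) (Icc a b) (Icc 0 1))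
    (h_inv : LeftInvOn Q (fun l => (μ (closedBall x l)).toReal) (Icc a b)) :
    IsQuantile (μ.map (dist x)) Q := by
  simp only [← map_dist_real_Iic] at h_surj h_inv
  exact .of_surjOn_of_leftInvOn h_surj h_inv

end Distance

/-- In the setting of a separable metric space `M` with Borel probability
measure `μ`, point `x` and fixed `k ≥ 1`, with `D_k(N)` the `k`-th smallest of the distances
from `x` to `N` i.i.d. sites (product measure on `Fin N → M`): suppose there are `γ ∈ [0,1)`,
`L > 0` and nonnegative reals `c_j` with `c_0 > 0` such that `A(l) = μ(closedBall x l)`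
restricted to `[0, L]` is a continuous strictly increasing bijection onto `[0,1]` whose inverse
satisfies `Ainv w = ∑_j c_j w^(j+γ)` on `[0,1]`.  Then
`lim_{N→∞} N^γ E[D_k(N)] = c_0 Γ(k+γ)/Γ(k)`. -/
theorem kth_nearest_distance_leading_asymptotics
    {M : Type*} [MetricSpace M] [TopologicalSpace.SeparableSpace M]
    [MeasurableSpace M] [BorelSpace M]
    (μ : Measure M) [IsProbabilityMeasure μ]
    (x : M) (k : ℕ) (hk : 1 ≤ k)
    (L : ℝ) (hL : 0 < L) (Ainv : ℝ → ℝ)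
    (hcont : ContinuousOn (fun l => (μ (closedBall x l)).toReal) (Set.Icc 0 L))
    (hmono : StrictMonoOn (fun l => (μ (closedBall x l)).toReal) (Set.Icc 0 L))
    (hbij : Set.BijOn (fun l => (μ (closedBall x l)).toReal) (Set.Icc 0 L) (Set.Icc 0 1))
    (hinv : Set.InvOn Ainv (fun l => (μ (closedBall x l)).toReal) (Set.Icc 0 L) (Set.Icc 0 1))
    (γ : ℝ) (hγ0 : 0 ≤ γ) (hγ1 : γ < 1) (c : ℕ → ℝ) (hc : ∀ j, 0 ≤ c j) (hc0 : 0 < c 0)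
    (hsum : ∀ w ∈ Set.Icc (0:ℝ) 1, Summable fun j : ℕ => c j * w ^ ((j : ℝ) + γ))
    (hser : ∀ w ∈ Set.Icc (0:ℝ) 1, Ainv w = ∑' j : ℕ, c j * w ^ ((j : ℝ) + γ)) :
    Tendsto
      (fun N : ℕ => (N : ℝ) ^ γ *
        ∫ ω : Fin N → M, kthVal k (fun i => dist x (ω i)) ∂(Measure.pi fun _ : Fin N => μ))
      atTop (𝓝 (c 0 * Real.Gamma (k + γ) / Real.Gamma k)) := by
  have hc1 : Summable c := by simpa using hsum 1 (by simp)
  have hser' : ∀ w ∈ Ioo 0 1, Ainv w = ∑' j : ℕ, c j * w ^ (j + γ) := fun w hw =>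
    hser w (Ioo_subset_Icc_self hw)
  exact kth_nearest_distance_leading_asymptotics_general μ (by fun_prop) hk
    (isQuantile_map_dist μ x hbij.surjOn hinv.1) (by positivity)
    (fun _ => abs_le_tsum_abs_mul_rpow hc1 hser') (tendsto_div_rpow_nhdsGT_zero hc1 hser')
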